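/- arXiv:math/0304410 — 2 statements merged into one kernel-verified Lean document; each statement's English description precedes it below -/
import Mathlib

section
/- There exists a 29×29 matrix with all entries equal to 1 or -1 whose determinant equals 2^28 · 7^12 · 320. Consequently md(29) ≥ 2^28 · 7^12 · 320. -/
/-- `md n` is the maximal determinant of an `n × n` matrix all of whose
entries are `1` or `-1`. -/
noncomputable def md (n : ℕ) : ℤ :=
  sSup {d : ℤ | ∃ M : Matrix (Fin n) (Fin n) ℤ,
    (∀ i j, M i j = 1 ∨ M i j = -1) ∧ M.det = d}

/-!
The Gram matrix of the record matrix has a block form: after cutting the 29 rows into five cells,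
`M * Mᵀ - 28 • 1` is constant on each pair of cells. It therefore has rank at most 5, and moving
the factors of that low-rank part past each other turns `det (M * Mᵀ)` into `28 ^ 24` times a
`5 × 5` determinant. The result is the square of `2 ^ 28 * 7 ^ 12 * 320`, so `|det M|` is known;
its sign is irrelevant, because negating one row keeps the entries `±1`.
-/

open Matrix
open scoped Nat

theorem one_submatrix_transpose_mul_self {m n R : Type*} [Fintype m] [DecidableEq n]
    [NonAssocSemiring R] (π : m → n) :
    ((1 : Matrix n n R).submatrix π id)ᵀ * (1 : Matrix n n R).submatrix π id =
      diagonal fun k => (Fintype.card {i // π i = k} : R) := by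
  ext k l
  rcases eq_or_ne k l with rfl | hkl
  · simp +contextual [mul_apply, one_apply, Fintype.card_subtype, eq_comm]
  · simpa [mul_apply, one_apply, hkl] using
      Finset.sum_eq_zero fun i _ => by grind

section BlockDeterminant

variable {m n R : Type*} [Fintype m] [DecidableEq m] [Fintype n] [DecidableEq n] [CommRing R]

theorem pow_card_mul_det_scalar_add_mul (A : Matrix m n R) (B : Matrix n m R) (a : R) :
    a ^ Fintype.card n * (scalar m a + A * B).det =
      a ^ Fintype.card m * (scalar n a + B * A).det := by
  have h := congrArg (Polynomial.eval a) (charpoly_mul_comm' (-A) B)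
  simpa only [Polynomial.eval_mul, Polynomial.eval_pow, Polynomial.eval_X, eval_charpoly,
    Matrix.neg_mul, Matrix.mul_neg, sub_neg_eq_add] using h

theorem pow_card_mul_det_scalar_add_submatrix (C : Matrix n n R) (π : m → n) (a : R) :
    a ^ Fintype.card n * (scalar m a + C.submatrix π π).det =
      a ^ Fintype.card m *
        (scalar n a + C * diagonal fun k => (Fintype.card {i // π i = k} : R)).det := by
  set P : Matrix m n R := (1 : Matrix n n R).submatrix π id
  have hC : C.submatrix π π = P * (C * Pᵀ) := by
    ext i j
    simp [P, mul_apply, one_apply]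
  rw [hC, pow_card_mul_det_scalar_add_mul, Matrix.mul_assoc, one_submatrix_transpose_mul_self]

end BlockDeterminant

/-- A matrix all of whose entries are `1` or `-1`: the candidates in the maximal determinant
problem, here over any ring and of any shape. -/
def IsSignMatrix {m n R : Type*} [One R] [Neg R] (M : Matrix m n R) : Prop :=
  ∀ i j, M i j = 1 ∨ M i j = -1

namespace IsSignMatrix

theorem updateRow_neg {m n R : Type*} [DecidableEq m] [One R] [InvolutiveNeg R]
    {M : Matrix m n R} (hM : IsSignMatrix M) (i : m) :
    IsSignMatrix (M.updateRow i (-M i)) := by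
  intro k j
  rcases eq_or_ne k i with rfl | hki
  · simpa [neg_eq_iff_eq_neg] using (hM k j).symm
  · simpa [hki] using hM k j

variable {n R : Type*} [Fintype n] [DecidableEq n]

theorem exists_det_eq_of_sq_eq [Nonempty n] [CommRing R] [NoZeroDivisors R]
    {M : Matrix n n R} (hM : IsSignMatrix M) {d : R} (hd : M.det ^ 2 = d ^ 2) :
    ∃ N : Matrix n n R, IsSignMatrix N ∧ N.det = d := by
  rcases sq_eq_sq_iff_eq_or_eq_neg.mp hd with h | h
  · exact ⟨M, hM, h⟩
  · obtain ⟨i⟩ := ‹Nonempty n›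
    refine ⟨M.updateRow i (-M i), hM.updateRow_neg i, ?_⟩
    rw [← neg_one_smul R (M i), det_updateRow_smul, updateRow_eq_self, h, neg_one_mul, neg_neg]

theorem abs_det_le_factorial [CommRing R] [LinearOrder R] [IsStrictOrderedRing R]
    {M : Matrix n n R} (hM : IsSignMatrix M) : |M.det| ≤ (Fintype.card n)! := by
  have habs : ∀ i j, AbsoluteValue.abs (M i j) ≤ 1 := fun i j => by
    rcases hM i j with h | h <;> simp [h]
  simpa using det_le habs

theorem det_le_md {n : ℕ} {M : Matrix (Fin n) (Fin n) ℤ} (hM : IsSignMatrix M) :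
    M.det ≤ md n := by
  refine le_csSup ⟨((Fintype.card (Fin n))! : ℤ), ?_⟩ ⟨M, hM, rfl⟩
  rintro _ ⟨N, hN, rfl⟩
  exact (le_abs_self _).trans (abs_det_le_factorial hN)

end IsSignMatrix

section RecordMatrix

/-- A `29 × 29` sign matrix of determinant `± 2 ^ 28 * 7 ^ 12 * 320`, displayed with `0` in place
of `-1`. The columns are grouped so that the blocks cut out by the row cells have constant row
sums. -/
def recordMatrix : Matrix (Fin 29) (Fin 29) ℤ :=
  let zeroOne : Matrix (Fin 29) (Fin 29) ℕ :=
    !![1, 0, 0,  1, 1, 1,  0,  1, 1, 1, 1,  1, 1, 0, 1, 0, 1, 1, 0, 1, 1, 1, 0, 0, 1, 1, 1, 1, 0;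
       0, 1, 0,  1, 1, 1,  0,  1, 1, 1, 1,  0, 1, 1, 1, 1, 0, 1, 1, 0, 0, 1, 1, 1, 0, 1, 0, 1, 1;
       0, 0, 1,  1, 1, 1,  0,  1, 1, 1, 1,  1, 0, 1, 0, 1, 1, 0, 1, 1, 1, 0, 1, 1, 1, 0, 1, 0, 1;
       1, 1, 1,  1, 0, 0,  0,  1, 1, 1, 1,  0, 0, 0, 1, 1, 1, 0, 0, 0, 1, 1, 1, 1, 1, 1, 1, 1, 1;
       1, 1, 1,  0, 1, 0,  0,  1, 1, 1, 1,  1, 1, 1, 1, 1, 1, 1, 1, 1, 0, 0, 0, 0, 0, 0, 1, 1, 1;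
       1, 1, 1,  0, 0, 1,  0,  1, 1, 1, 1,  1, 1, 1, 0, 0, 0, 1, 1, 1, 1, 1, 1, 1, 1, 1, 0, 0, 0;
       0, 0, 0,  0, 0, 0,  0,  0, 0, 0, 0,  1, 1, 1, 1, 1, 1, 1, 1, 1, 1, 1, 1, 1, 1, 1, 1, 1, 1;
       1, 1, 1,  1, 1, 1,  0,  1, 0, 0, 0,  1, 1, 1, 0, 0, 0, 0, 0, 0, 1, 1, 1, 0, 0, 0, 1, 1, 1;
       1, 1, 1,  1, 1, 1,  0,  0, 1, 0, 0,  0, 1, 0, 0, 1, 1, 1, 1, 0, 1, 0, 0, 1, 1, 0, 0, 1, 0;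
       1, 1, 1,  1, 1, 1,  0,  0, 0, 1, 0,  0, 0, 1, 1, 0, 1, 0, 1, 1, 0, 1, 0, 0, 1, 1, 0, 0, 1;
       1, 1, 1,  1, 1, 1,  0,  0, 0, 0, 1,  1, 0, 0, 1, 1, 0, 1, 0, 1, 0, 0, 1, 1, 0, 1, 1, 0, 0;
       1, 0, 1,  1, 1, 0,  1,  0, 1, 1, 0,  1, 1, 1, 0, 1, 1, 0, 0, 1, 0, 1, 1, 1, 0, 1, 0, 1, 0;
       1, 1, 0,  1, 1, 0,  1,  0, 0, 1, 1,  1, 1, 1, 1, 0, 1, 1, 0, 0, 1, 0, 1, 1, 1, 0, 0, 0, 1;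
       0, 1, 1,  1, 1, 0,  1,  0, 1, 0, 1,  1, 1, 1, 1, 1, 0, 0, 1, 0, 1, 1, 0, 0, 1, 1, 1, 0, 0;
       0, 1, 1,  1, 0, 1,  1,  1, 0, 1, 0,  0, 1, 1, 1, 1, 1, 1, 0, 1, 1, 1, 0, 1, 0, 0, 1, 0, 0;
       1, 0, 1,  1, 0, 1,  1,  1, 0, 0, 1,  1, 0, 1, 1, 1, 1, 1, 1, 0, 0, 1, 1, 0, 1, 0, 0, 1, 0;
       1, 1, 0,  1, 0, 1,  1,  1, 1, 0, 0,  1, 1, 0, 1, 1, 1, 0, 1, 1, 1, 0, 1, 0, 0, 1, 0, 0, 1;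
       0, 1, 1,  1, 1, 0,  1,  1, 0, 0, 1,  1, 0, 0, 0, 0, 1, 1, 1, 1, 1, 1, 0, 1, 0, 1, 0, 1, 1;
       1, 0, 1,  1, 1, 0,  1,  1, 1, 0, 0,  0, 1, 0, 1, 0, 0, 1, 1, 1, 0, 1, 1, 1, 1, 0, 1, 0, 1;
       1, 1, 0,  1, 1, 0,  1,  1, 0, 1, 0,  0, 0, 1, 0, 1, 0, 1, 1, 1, 1, 0, 1, 0, 1, 1, 1, 1, 0;
       0, 1, 1,  0, 1, 1,  1,  1, 0, 1, 0,  1, 1, 0, 1, 0, 1, 0, 1, 0, 0, 0, 1, 1, 1, 1, 1, 1, 0;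
       1, 0, 1,  0, 1, 1,  1,  1, 0, 0, 1,  0, 1, 1, 1, 1, 0, 0, 0, 1, 1, 0, 0, 1, 1, 1, 0, 1, 1;
       1, 1, 0,  0, 1, 1,  1,  1, 1, 0, 0,  1, 0, 1, 0, 1, 1, 1, 0, 0, 0, 1, 0, 1, 1, 1, 1, 0, 1;
       0, 1, 1,  0, 1, 1,  1,  0, 1, 1, 0,  1, 0, 0, 1, 1, 0, 1, 0, 1, 1, 1, 1, 0, 1, 0, 0, 1, 1;
       1, 0, 1,  0, 1, 1,  1,  0, 0, 1, 1,  0, 1, 0, 0, 1, 1, 1, 1, 0, 1, 1, 1, 0, 0, 1, 1, 0, 1;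
       1, 1, 0,  0, 1, 1,  1,  0, 1, 0, 1,  0, 0, 1, 1, 0, 1, 0, 1, 1, 1, 1, 1, 1, 0, 0, 1, 1, 0;
       1, 1, 0,  1, 0, 1,  1,  0, 0, 1, 1,  1, 1, 0, 0, 1, 0, 0, 1, 1, 0, 1, 0, 1, 1, 0, 1, 1, 1;
       0, 1, 1,  1, 0, 1,  1,  0, 1, 0, 1,  0, 1, 1, 0, 0, 1, 1, 0, 1, 0, 0, 1, 0, 1, 1, 1, 1, 1;
       1, 0, 1,  1, 0, 1,  1,  0, 1, 1, 0,  1, 0, 1, 1, 0, 0, 1, 1, 0, 1, 0, 0, 1, 0, 1, 1, 1, 1]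
  zeroOne.map fun b => if b = 1 then 1 else -1

/-- The cell, of size 3, 3, 1, 4 or 18, to which a row of `recordMatrix` belongs. -/
def recordCell : Fin 29 → Fin 5 :=
  ![0, 0, 0, 1, 1, 1, 2, 3, 3, 3, 3, 4, 4, 4, 4, 4, 4, 4, 4, 4, 4, 4, 4, 4, 4, 4, 4, 4, 4]

/-- The inner products of the rows of `recordMatrix` as a function of the cells of the two rows; for
a row with itself the value is `28` less than the inner product. -/
def recordCellGram : Matrix (Fin 5) (Fin 5) ℤ :=
  !![1, 5, 1,  1, 1;
     5, 1, 1,  1, 1;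
     1, 1, 1, -3, 1;
     1, 1, -3, 1, 1;
     1, 1, 1,  1, 1]

theorem isSignMatrix_recordMatrix : IsSignMatrix recordMatrix := fun _ _ =>
  ite_eq_or_eq _ _ _

theorem recordMatrix_mul_transpose :
    recordMatrix * recordMatrixᵀ =
      scalar (Fin 29) 28 + recordCellGram.submatrix recordCell recordCell := by
  decide +kernel

theorem card_recordCell_fiber (k : Fin 5) :
    Fintype.card {i // recordCell i = k} = (![3, 3, 1, 4, 18] : Fin 5 → ℕ) k := by
  revert k
  decide

theorem det_scalar_add_recordCellGram_mul_diagonal :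
    (scalar (Fin 5) 28 +
      recordCellGram * diagonal fun k => ((![3, 3, 1, 4, 18] : Fin 5 → ℕ) k : ℤ)).det =
      2 ^ 20 * 5 ^ 2 := by
  decide +kernel

theorem det_recordMatrix_sq : recordMatrix.det ^ 2 = (2 ^ 28 * 7 ^ 12 * 320) ^ 2 := by
  have h := pow_card_mul_det_scalar_add_submatrix recordCellGram recordCell 28
  simp only [card_recordCell_fiber] at h
  rw [← recordMatrix_mul_transpose, det_mul, det_transpose, ← sq,
    det_scalar_add_recordCellGram_mul_diagonal, Fintype.card_fin, Fintype.card_fin] at h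
  linarith

end RecordMatrix

theorem stmt_3 :
    (∃ M : Matrix (Fin 29) (Fin 29) ℤ,
      (∀ i j, M i j = 1 ∨ M i j = -1) ∧ M.det = 2^28 * 7^12 * 320) ∧
    (2^28 * 7^12 * 320 : ℤ) ≤ md 29 := by
  obtain ⟨M, hM, hdet⟩ := isSignMatrix_recordMatrix.exists_det_eq_of_sq_eq det_recordMatrix_sq
  exact ⟨⟨M, hM, hdet⟩, hdet ▸ hM.det_le_md⟩
end

section
/- There exists a 47×47 matrix with all entries equal to 1 or -1 whose determinant equals 2^46 · 11^18 · 15^4 · 60. Consequently md(47) ≥ 2^46 · 11^18 · 15^4 · 60. -/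
/-!
Let `Q` be the `q × q` core of a skew conference matrix, `J` the all-ones matrix and `C` the
`4 × 3` matrix obtained from a normalized Hadamard matrix by deleting its constant column. Put
`B = 𝟙 ⊗ C` and `S = Q ⊗ (J - 2) - 1 ⊗ J`. For every `X`, the matrix `M(X) = [[X, Bᵀ], [B, S]]`
satisfies `M(X) * M(0)ᵀ = [[4q, X * Bᵀ], [0, 4q + (4 - J) ⊗ J]]`, whose determinant does not depend
on `X` and is a nonzero square for odd `q`. Hence `det M(X) = det M(0)` is known up to sign, and the
sign can be adjusted because the order `4q + 3` is odd. For `X = J` the entries are signs. The value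
for order `47` comes from the quadratic residues modulo `11`.
-/

open Matrix
open scoped Kronecker

section SignMatrices

variable {n : Type*} [Fintype n] [DecidableEq n]

lemma abs_det_le_factorial_of_sign {M : Matrix n n ℤ} (hM : ∀ i j, M i j = 1 ∨ M i j = -1) :
    |M.det| ≤ (Fintype.card n).factorial := by
  have entry_le (i j : n) : AbsoluteValue.abs (M i j) ≤ 1 := by
    rcases hM i j with h | h <;> simp [h]
  simpa using Matrix.det_le entry_le

lemma det_le_md {k : ℕ} {M : Matrix (Fin k) (Fin k) ℤ} (hM : ∀ i j, M i j = 1 ∨ M i j = -1) :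
    M.det ≤ md k := by
  refine le_csSup ⟨(Fintype.card (Fin k)).factorial, ?_⟩ ⟨M, hM, rfl⟩
  rintro _ ⟨N, hN, rfl⟩
  exact (le_abs_self _).trans (abs_det_le_factorial_of_sign hN)

lemma exists_sign_det_eq_of_det_sq_eq {M : Matrix n n ℤ} (hM : ∀ i j, M i j = 1 ∨ M i j = -1)
    (hodd : Odd (Fintype.card n)) {d : ℤ} (hd : M.det ^ 2 = d ^ 2) :
    ∃ N : Matrix (Fin (Fintype.card n)) (Fin (Fintype.card n)) ℤ,
      (∀ i j, N i j = 1 ∨ N i j = -1) ∧ N.det = d := by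
  let e := Fintype.equivFin n
  rcases sq_eq_sq_iff_eq_or_eq_neg.mp hd with h | h
  · exact ⟨reindex e e M, fun i j => hM _ _, by rw [det_reindex_self, h]⟩
  · refine ⟨reindex e e (-M), fun i j => ?_, ?_⟩
    · rcases hM (e.symm i) (e.symm j) with h | h <;> simp [h]
    · rw [det_reindex_self, det_neg, hodd.neg_one_pow, h, neg_one_mul, neg_neg]

end SignMatrices

section KroneckerSub

variable {l m n p R : Type*} [NonUnitalNonAssocRing R]

lemma sub_kronecker (A₁ A₂ : Matrix l m R) (B : Matrix n p R) :
    (A₁ - A₂) ⊗ₖ B = A₁ ⊗ₖ B - A₂ ⊗ₖ B := by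
  ext; simp [sub_mul]

lemma kronecker_sub (A : Matrix l m R) (B₁ B₂ : Matrix n p R) :
    A ⊗ₖ (B₁ - B₂) = A ⊗ₖ B₁ - A ⊗ₖ B₂ := by
  ext; simp [mul_sub]

end KroneckerSub

section AllOnes

/-- The all-ones matrix, usually written `J`; single rows and columns of ones are included. -/
def allOnes (m n R : Type*) [One R] : Matrix m n R := of 1

variable {l m n R : Type*}

@[simp]
lemma allOnes_apply [One R] (i : m) (j : n) : allOnes m n R i j = 1 := rfl

@[simp]
lemma allOnes_transpose [One R] : (allOnes m n R)ᵀ = allOnes n m R := rfl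

@[simp]
lemma allOnes_mul_allOnes [Fintype m] [Semiring R] :
    allOnes l m R * allOnes m n R = (Fintype.card m : R) • allOnes l n R := by
  ext; simp [mul_apply]

lemma allOnes_unique [Unique n] [DecidableEq n] [Semiring R] : allOnes n n R = 1 := by
  ext i j
  obtain rfl := Subsingleton.elim i j
  simp

variable [CommRing R] [Fintype m] [DecidableEq m] [Fintype n] [DecidableEq n]

lemma pow_mul_det_smul_one_add_mul (x : R) (A : Matrix m n R) (B : Matrix n m R) :
    x ^ Fintype.card n * (x • (1 : Matrix m m R) + A * B).det =
      x ^ Fintype.card m * (x • (1 : Matrix n n R) + B * A).det := by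
  simpa [eval_charpoly, ← smul_one_eq_diagonal] using
    congrArg (Polynomial.eval x) (charpoly_mul_comm' A (-B))

lemma pow_mul_det_smul_one_add_kronecker_allOnes (x : R) (A : Matrix m m R) :
    x ^ Fintype.card m * (x • (1 : Matrix (m × n) (m × n) R) + A ⊗ₖ allOnes n n R).det =
      x ^ (Fintype.card m * Fintype.card n) *
        (x • (1 : Matrix m m R) + (Fintype.card n : R) • A).det := by
  have factor :
      A ⊗ₖ allOnes n n R = (A ⊗ₖ allOnes n Unit R) * ((1 : Matrix m m R) ⊗ₖ allOnes Unit n R) := by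
    simp [← mul_kronecker_mul]
  have swapped : x • (1 : Matrix (m × Unit) (m × Unit) R) +
      ((1 : Matrix m m R) ⊗ₖ allOnes Unit n R) * (A ⊗ₖ allOnes n Unit R) =
      (x • (1 : Matrix m m R) + (Fintype.card n : R) • A) ⊗ₖ (1 : Matrix Unit Unit R) := by
    rw [← mul_kronecker_mul, Matrix.one_mul, allOnes_mul_allOnes, allOnes_unique, kronecker_smul,
      add_kronecker, smul_kronecker, smul_kronecker, one_kronecker_one]
  have h := pow_mul_det_smul_one_add_mul x (A ⊗ₖ allOnes n Unit R)
    ((1 : Matrix m m R) ⊗ₖ allOnes Unit n R)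
  rw [← factor, swapped, det_kronecker] at h
  simpa using h

lemma mul_det_smul_one_add_smul_allOnes (a b : R) :
    a * (a • (1 : Matrix n n R) + b • allOnes n n R).det =
      a ^ Fintype.card n * (a + Fintype.card n * b) := by
  have h := pow_mul_det_smul_one_add_mul a (b • allOnes n Unit R) (allOnes Unit n R)
  simpa [allOnes_unique, mul_comm b] using h

end AllOnes

/-- The core of a normalized skew conference matrix of order `card ι + 1`: the block that remains
after deleting its first row and column. The diagonal vanishes by skew-symmetry. -/
structure IsSkewConferenceCore {ι : Type*} [Fintype ι] [DecidableEq ι] (Q : Matrix ι ι ℤ) :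
    Prop where
  sign_of_ne : ∀ i j, i ≠ j → Q i j = 1 ∨ Q i j = -1
  transpose_eq_neg : Qᵀ = -Q
  mul_transpose_self : Q * Qᵀ = (Fintype.card ι : ℤ) • 1 - allOnes ι ι ℤ

/-- The last three columns of the normalized Hadamard matrix of order four. -/
def hadamardColumns : Matrix (Fin 4) (Fin 3) ℤ := !![1, 1, 1; 1, -1, -1; -1, 1, -1; -1, -1, 1]

lemma hadamardColumns_transpose_mul_self :
    hadamardColumnsᵀ * hadamardColumns = (4 : ℤ) • 1 := by
  decide

lemma hadamardColumns_mul_transpose_self :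
    hadamardColumns * hadamardColumnsᵀ = (4 : ℤ) • 1 - allOnes (Fin 4) (Fin 4) ℤ := by
  decide

lemma allOnes_mul_hadamardColumns {m : Type*} : allOnes m (Fin 4) ℤ * hadamardColumns = 0 := by
  ext i j
  fin_cases j <;> simp [mul_apply, Fin.sum_univ_four, hadamardColumns]

lemma hadamardColumns_sign (i : Fin 4) (j : Fin 3) :
    hadamardColumns i j = 1 ∨ hadamardColumns i j = -1 := by
  fin_cases i <;> fin_cases j <;> decide

/-- The symmetric Hadamard matrix `J - 2` of order four, which has constant row sum two. -/
def regularHadamard : Matrix (Fin 4) (Fin 4) ℤ := allOnes (Fin 4) (Fin 4) ℤ - (2 : ℤ) • 1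

lemma regularHadamard_transpose : regularHadamardᵀ = regularHadamard := by
  decide

lemma regularHadamard_mul_self : regularHadamard * regularHadamard = (4 : ℤ) • 1 := by
  decide

lemma regularHadamard_mul_allOnes :
    regularHadamard * allOnes (Fin 4) (Fin 4) ℤ = (2 : ℤ) • allOnes (Fin 4) (Fin 4) ℤ := by
  decide

lemma allOnes_mul_regularHadamard :
    allOnes (Fin 4) (Fin 4) ℤ * regularHadamard = (2 : ℤ) • allOnes (Fin 4) (Fin 4) ℤ := by
  decide

lemma regularHadamard_sign (i j : Fin 4) :
    regularHadamard i j = 1 ∨ regularHadamard i j = -1 := by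
  fin_cases i <;> fin_cases j <;> decide

section Construction

variable {ι : Type*} [DecidableEq ι]

/-- The `4q × 4q` block `Q ⊗ (J - 2) - 1 ⊗ J` built from a matrix `Q` of order `q`. -/
def innerBlock (Q : Matrix ι ι ℤ) : Matrix (ι × Fin 4) (ι × Fin 4) ℤ :=
  Q ⊗ₖ regularHadamard - 1 ⊗ₖ allOnes (Fin 4) (Fin 4) ℤ

/-- `q` copies of `hadamardColumns` on top of each other. The columns are indexed by `Unit × Fin 3`
rather than `Fin 3` so that the matrix is a Kronecker product. -/
def border (ι : Type*) : Matrix (ι × Fin 4) (Unit × Fin 3) ℤ := allOnes ι Unit ℤ ⊗ₖ hadamardColumns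

/-- The matrix of order `4q + 3` with corner `X`, obtained by bordering `innerBlock Q`. -/
def borderedMatrix (Q : Matrix ι ι ℤ) (X : Matrix (Unit × Fin 3) (Unit × Fin 3) ℤ) :
    Matrix (Unit × Fin 3 ⊕ ι × Fin 4) (Unit × Fin 3 ⊕ ι × Fin 4) ℤ :=
  fromBlocks X (border ι)ᵀ (border ι) (innerBlock Q)

end Construction

/-- Up to sign, the determinant of `borderedMatrix Q X` for a core `Q` of order `2 * m + 1`. -/
def coreDet (m : ℕ) : ℤ :=
  4 * (4 * (2 * m + 1)) ^ (3 * (m + 1)) * (4 * (2 * m + 5)) ^ m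

section Border

variable {ι : Type*}

lemma border_transpose_mul_self [Fintype ι] :
    (border ι)ᵀ * border ι = (4 * Fintype.card ι : ℤ) • 1 := by
  rw [border, ← kroneckerMap_transpose, ← mul_kronecker_mul, hadamardColumns_transpose_mul_self,
    allOnes_transpose, allOnes_mul_allOnes, allOnes_unique, smul_kronecker, kronecker_smul,
    one_kronecker_one, smul_smul, mul_comm]

lemma border_mul_transpose_self :
    border ι * (border ι)ᵀ =
      allOnes ι ι ℤ ⊗ₖ ((4 : ℤ) • 1 - allOnes (Fin 4) (Fin 4) ℤ) := by
  rw [border, ← kroneckerMap_transpose, ← mul_kronecker_mul, hadamardColumns_mul_transpose_self]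
  simp

end Border

namespace IsSkewConferenceCore

variable {ι : Type*} [Fintype ι] [DecidableEq ι] {Q : Matrix ι ι ℤ}

lemma diag_eq_zero (hQ : IsSkewConferenceCore Q) (i : ι) : Q i i = 0 := by
  have h := congrFun₂ hQ.transpose_eq_neg i i
  simp only [transpose_apply, neg_apply] at h
  lia

lemma mul_allOnes (hQ : IsSkewConferenceCore Q) : Q * allOnes ι Unit ℤ = 0 := by
  have gram_mul : Q * Qᴴ * allOnes ι Unit ℤ = 0 := by
    rw [conjTranspose_eq_transpose_of_trivial, hQ.mul_transpose_self, Matrix.sub_mul,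
      Matrix.smul_mul, Matrix.one_mul, allOnes_mul_allOnes, sub_self]
  simpa [conjTranspose_eq_transpose_of_trivial, hQ.transpose_eq_neg] using
    (self_mul_conjTranspose_mul_eq_zero _ _).mp gram_mul

lemma innerBlock_mul_border (hQ : IsSkewConferenceCore Q) : innerBlock Q * border ι = 0 := by
  rw [innerBlock, border, Matrix.sub_mul, ← mul_kronecker_mul, ← mul_kronecker_mul,
    hQ.mul_allOnes, allOnes_mul_hadamardColumns, zero_kronecker, kronecker_zero, sub_zero]

lemma innerBlock_mul_transpose_self (hQ : IsSkewConferenceCore Q) :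
    innerBlock Q * (innerBlock Q)ᵀ =
      (4 : ℤ) • ((Q * Qᵀ) ⊗ₖ 1 + 1 ⊗ₖ allOnes (Fin 4) (Fin 4) ℤ) := by
  have transpose_eq :
      (innerBlock Q)ᵀ = Qᵀ ⊗ₖ regularHadamard - 1 ⊗ₖ allOnes (Fin 4) (Fin 4) ℤ := by
    rw [innerBlock, transpose_sub, ← kroneckerMap_transpose, ← kroneckerMap_transpose,
      regularHadamard_transpose, transpose_one, allOnes_transpose]
  have mixed_cancel :
      (Q * 1) ⊗ₖ (regularHadamard * allOnes (Fin 4) (Fin 4) ℤ) +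
        (1 * Qᵀ) ⊗ₖ (allOnes (Fin 4) (Fin 4) ℤ * regularHadamard) = 0 := by
    rw [regularHadamard_mul_allOnes, allOnes_mul_regularHadamard, ← add_kronecker, Matrix.mul_one,
      Matrix.one_mul, hQ.transpose_eq_neg, add_neg_cancel, zero_kronecker]
  calc
    _ = (Q * Qᵀ) ⊗ₖ (regularHadamard * regularHadamard) +
          (1 * 1) ⊗ₖ (allOnes (Fin 4) (Fin 4) ℤ * allOnes (Fin 4) (Fin 4) ℤ) -
          ((Q * 1) ⊗ₖ (regularHadamard * allOnes (Fin 4) (Fin 4) ℤ) +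
            (1 * Qᵀ) ⊗ₖ (allOnes (Fin 4) (Fin 4) ℤ * regularHadamard)) := by
      rw [transpose_eq, innerBlock]
      simp only [mul_kronecker_mul]
      noncomm_ring
    _ = _ := by
      rw [mixed_cancel, regularHadamard_mul_self, allOnes_mul_allOnes, Fintype.card_fin,
        Nat.cast_ofNat, Matrix.one_mul, kronecker_smul, kronecker_smul, sub_zero, smul_add]

lemma gram_border_innerBlock (hQ : IsSkewConferenceCore Q) :
    border ι * (border ι)ᵀ + innerBlock Q * (innerBlock Q)ᵀ =
      (4 * Fintype.card ι : ℤ) • 1 +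
        ((4 : ℤ) • 1 - allOnes ι ι ℤ) ⊗ₖ allOnes (Fin 4) (Fin 4) ℤ := by
  rw [border_mul_transpose_self, hQ.innerBlock_mul_transpose_self, hQ.mul_transpose_self]
  simp only [sub_kronecker, kronecker_sub, smul_kronecker, kronecker_smul, one_kronecker_one]
  module

lemma borderedMatrix_mul_transpose (hQ : IsSkewConferenceCore Q)
    (X : Matrix (Unit × Fin 3) (Unit × Fin 3) ℤ) :
    borderedMatrix Q X * (borderedMatrix Q 0)ᵀ =
      fromBlocks ((4 * Fintype.card ι : ℤ) • 1) (X * (border ι)ᵀ) 0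
        ((4 * Fintype.card ι : ℤ) • 1 +
          ((4 : ℤ) • 1 - allOnes ι ι ℤ) ⊗ₖ allOnes (Fin 4) (Fin 4) ℤ) := by
  have border_mul_innerBlock : (border ι)ᵀ * (innerBlock Q)ᵀ = 0 := by
    rw [← transpose_mul, hQ.innerBlock_mul_border, transpose_zero]
  simp [borderedMatrix, fromBlocks_transpose, fromBlocks_multiply, hQ.innerBlock_mul_border,
    border_mul_innerBlock, border_transpose_mul_self, hQ.gram_border_innerBlock]

variable {m : ℕ}

lemma det_gram (hm : Fintype.card ι = 2 * m + 1) :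
    ((4 * Fintype.card ι : ℤ) • (1 : Matrix (ι × Fin 4) (ι × Fin 4) ℤ) +
      ((4 : ℤ) • 1 - allOnes ι ι ℤ) ⊗ₖ allOnes (Fin 4) (Fin 4) ℤ).det =
      (4 * Fintype.card ι : ℤ) ^ (3 * Fintype.card ι) *
        (16 * (4 * (Fintype.card ι + 4)) ^ (2 * m)) := by
  have reduced_det : ((4 * Fintype.card ι : ℤ) • (1 : Matrix ι ι ℤ) +
      (Fintype.card (Fin 4) : ℤ) • ((4 : ℤ) • 1 - allOnes ι ι ℤ)).det =
      16 * (4 * (Fintype.card ι + 4)) ^ (2 * m) := by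
    have rearrange : (4 * Fintype.card ι : ℤ) • (1 : Matrix ι ι ℤ) +
        (Fintype.card (Fin 4) : ℤ) • ((4 : ℤ) • 1 - allOnes ι ι ℤ) =
        (4 * (Fintype.card ι + 4) : ℤ) • 1 + (-4 : ℤ) • allOnes ι ι ℤ := by
      rw [Fintype.card_fin]
      module
    rw [rearrange]
    refine mul_left_cancel₀ (by lia : (4 * (Fintype.card ι + 4) : ℤ) ≠ 0) ?_
    rw [mul_det_smul_one_add_smul_allOnes, hm]
    ring
  refine mul_left_cancel₀ (pow_ne_zero (Fintype.card ι) (by lia : (4 * Fintype.card ι : ℤ) ≠ 0)) ?_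
  rw [pow_mul_det_smul_one_add_kronecker_allOnes, reduced_det, Fintype.card_fin]
  ring

lemma det_borderedMatrix_mul_det_zero (hQ : IsSkewConferenceCore Q)
    (hm : Fintype.card ι = 2 * m + 1) (X : Matrix (Unit × Fin 3) (Unit × Fin 3) ℤ) :
    (borderedMatrix Q X).det * (borderedMatrix Q 0).det = coreDet m ^ 2 := by
  rw [← det_transpose (borderedMatrix Q 0), ← det_mul, hQ.borderedMatrix_mul_transpose,
    det_fromBlocks_zero₂₁, det_gram hm, det_smul, det_one, coreDet, hm]
  simp only [Fintype.card_prod, Fintype.card_unit, Fintype.card_fin]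
  push_cast
  ring

lemma det_borderedMatrix_sq (hQ : IsSkewConferenceCore Q)
    (hm : Fintype.card ι = 2 * m + 1) (X : Matrix (Unit × Fin 3) (Unit × Fin 3) ℤ) :
    (borderedMatrix Q X).det ^ 2 = coreDet m ^ 2 := by
  have hX := hQ.det_borderedMatrix_mul_det_zero hm X
  have h0 := hQ.det_borderedMatrix_mul_det_zero hm 0
  have det_zero_ne_zero : (borderedMatrix Q 0).det ≠ 0 := by
    have : coreDet m ≠ 0 := by
      unfold coreDet
      positivity
    exact right_ne_zero_of_mul (hX ▸ pow_ne_zero 2 this)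
  rw [mul_right_cancel₀ det_zero_ne_zero (hX.trans h0.symm), sq, h0]

lemma borderedMatrix_sign (hQ : IsSkewConferenceCore Q) (i j : Unit × Fin 3 ⊕ ι × Fin 4) :
    borderedMatrix Q (allOnes _ _ ℤ) i j = 1 ∨ borderedMatrix Q (allOnes _ _ ℤ) i j = -1 := by
  rcases i with i | ⟨a, x⟩ <;> rcases j with j | ⟨b, y⟩
  · exact Or.inl rfl
  · simpa [borderedMatrix, border] using hadamardColumns_sign y i.2
  · simpa [borderedMatrix, border] using hadamardColumns_sign x j.2
  · obtain rfl | hab := eq_or_ne a b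
    · simp [borderedMatrix, innerBlock, hQ.diag_eq_zero]
    · rcases hQ.sign_of_ne a b hab with hs | hs <;> rcases regularHadamard_sign x y with hr | hr <;>
        simp [borderedMatrix, innerBlock, hab, hs, hr]

end IsSkewConferenceCore

section Paley

variable (F : Type*) [Field F] [Fintype F] [DecidableEq F]

/-- The Jacobsthal matrix of a finite field, whose entries are the quadratic characters of
differences. -/
def jacobsthal : Matrix F F ℤ := of fun a b => quadraticChar F (a - b)

variable {F}

lemma sum_quadraticChar_sub_mul_quadraticChar_sub (hF : ringChar F ≠ 2) {a b : F} (hab : a ≠ b) :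
    ∑ c, quadraticChar F (a - c) * quadraticChar F (b - c) = -1 := by
  have sub_ne : a - b ≠ 0 := sub_ne_zero.mpr hab
  let affine : F ≃ F := (Equiv.mulLeft₀ (a - b) sub_ne).trans (Equiv.addLeft b)
  calc
    _ = ∑ x, quadraticChar F (-1) * (quadraticChar F x * quadraticChar F (1 - x)) := by
      refine (Fintype.sum_equiv affine _ _ fun x => ?_).symm
      have ha : a - affine x = (a - b) * (1 - x) := by
        change a - (b + (a - b) * x) = _
        ring
      have hb : b - affine x = (a - b) * (-1 * x) := by simp [affine]
      rw [ha, hb, map_mul, map_mul, map_mul]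
      linear_combination (-quadraticChar F (-1) * quadraticChar F x * quadraticChar F (1 - x)) *
        quadraticChar_sq_one sub_ne
    _ = quadraticChar F (-1) * jacobiSum (quadraticChar F) (quadraticChar F)⁻¹ := by
      rw [← Finset.mul_sum, (quadraticChar_isQuadratic F).inv, jacobiSum]
    _ = -1 := by
      rw [jacobiSum_nontrivial_inv (quadraticChar_ne_one hF), mul_neg, ← sq,
        quadraticChar_sq_one (neg_ne_zero.mpr one_ne_zero)]

lemma sum_quadraticChar_sub_mul_self (a : F) :
    ∑ c, quadraticChar F (a - c) * quadraticChar F (a - c) = Fintype.card F - 1 := by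
  have square_eq (x : F) : quadraticChar F x * quadraticChar F x = 1 - if x = 0 then 1 else 0 := by
    obtain rfl | hx := eq_or_ne x 0
    · simp
    · rw [← sq, quadraticChar_sq_one hx, if_neg hx, sub_zero]
  calc
    _ = ∑ x, quadraticChar F x * quadraticChar F x :=
      (Equiv.subLeft a).sum_comp fun x => quadraticChar F x * quadraticChar F x
    _ = ∑ x : F, (1 - if x = 0 then 1 else 0) := Fintype.sum_congr _ _ square_eq
    _ = _ := by simp

lemma jacobsthal_mul_transpose_self (hF : ringChar F ≠ 2) :
    jacobsthal F * (jacobsthal F)ᵀ = (Fintype.card F : ℤ) • 1 - allOnes F F ℤ := by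
  ext a b
  obtain rfl | hab := eq_or_ne a b
  · rw [Matrix.sub_apply, Matrix.smul_apply, one_apply_eq, smul_eq_mul, mul_one, allOnes_apply]
    exact sum_quadraticChar_sub_mul_self a
  · rw [Matrix.sub_apply, Matrix.smul_apply, one_apply_ne hab, smul_zero, zero_sub, allOnes_apply]
    exact sum_quadraticChar_sub_mul_quadraticChar_sub hF hab

lemma jacobsthal_isSkewConferenceCore (hF : Fintype.card F % 4 = 3) :
    IsSkewConferenceCore (jacobsthal F) := by
  have ringChar_ne_two : ringChar F ≠ 2 := by
    intro h
    have := FiniteField.even_card_of_char_two h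
    lia
  refine ⟨fun a b hab => quadraticChar_dichotomy (sub_ne_zero.mpr hab), ?_,
    jacobsthal_mul_transpose_self ringChar_ne_two⟩
  have char_neg_one : quadraticChar F (-1) = -1 := by
    rw [quadraticChar_neg_one ringChar_ne_two, ZMod.χ₄_nat_three_mod_four hF]
  ext a b
  rw [transpose_apply, neg_apply, jacobsthal, of_apply, of_apply, ← neg_sub a b, ← neg_one_mul,
    map_mul, char_neg_one, neg_one_mul]

end Paley

theorem stmt_10_general {ι : Type*} [Fintype ι] [DecidableEq ι] {Q : Matrix ι ι ℤ}
    (hQ : IsSkewConferenceCore Q) {m : ℕ} (hm : Fintype.card ι = 2 * m + 1) :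
    (∃ M : Matrix (Fin (4 * Fintype.card ι + 3)) (Fin (4 * Fintype.card ι + 3)) ℤ,
      (∀ i j, M i j = 1 ∨ M i j = -1) ∧ M.det = coreDet m) ∧
    coreDet m ≤ md (4 * Fintype.card ι + 3) := by
  have order : Fintype.card (Unit × Fin 3 ⊕ ι × Fin 4) = 4 * Fintype.card ι + 3 := by
    simp [mul_comm, add_comm]
  have exists_matrix := exists_sign_det_eq_of_det_sq_eq hQ.borderedMatrix_sign
    (order ▸ ⟨2 * Fintype.card ι + 1, by ring⟩) (hQ.det_borderedMatrix_sq hm _)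
  rw [order] at exists_matrix
  obtain ⟨M, sign, det_eq⟩ := exists_matrix
  exact ⟨⟨M, sign, det_eq⟩, det_eq ▸ det_le_md sign⟩

theorem stmt_10 :
    (∃ M : Matrix (Fin 47) (Fin 47) ℤ,
      (∀ i j, M i j = 1 ∨ M i j = -1) ∧ M.det = 2^46 * 11^18 * 15^4 * 60) ∧
    (2^46 * 11^18 * 15^4 * 60 : ℤ) ≤ md 47 := by
  have : Fact (Nat.Prime 11) := ⟨by norm_num⟩
  exact stmt_10_general (m := 5) (jacobsthal_isSkewConferenceCore (F := ZMod 11) rfl) rfl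
end
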